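/- The open set condition fails for {S_i}_{i=1}^m if and only if there exist a positive integer M and finite words α₀,…,α_M and β₀,…,β_M over {1,…,m} with 1 ≤ p_{α_k}, p_{β_k} ≤ 2T−1 for all k, with α₀ and β₀ single letters and α₀ ≠ β₀, such that the sequence (q_k, c_k)_{k=1}^{M+1} with the recursive structure w.r.t. ({α_k},{β_k}) satisfies (q_{M+1}, c_{M+1}) = (0,0) and (q_k, c_k) ∈ Ξ for all 1 ≤ k ≤ M+1. -/

import Mathlib

open Polynomial Filter

noncomputable section

namespace PVOSC

variable {m : ℕ}

/-- `λ⁻¹` is a Pisot (P.V.) number: an algebraic integer `> 1` all of whose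
Galois conjugates other than itself have complex absolute value `< 1`. -/
def IsPisot (θ : ℝ) : Prop :=
  1 < θ ∧ IsIntegral ℤ θ ∧
    ∀ z : ℂ, aeval z (minpoly ℤ θ) = 0 → z ≠ (θ : ℂ) → ‖z‖ < 1

/-- `p_σ` for a finite word `σ`. -/
def wordP (p : Fin m → ℕ) (σ : List (Fin m)) : ℕ := (σ.map p).sum

/-- The contracting similitude `S_i(x) = λ^{p_i} x + b_i`. -/
def Smap (lam : ℝ) (p : Fin m → ℕ) (b : Fin m → ℝ) (i : Fin m) : ℝ → ℝ :=
  fun x => lam ^ p i * x + b i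

/-- `S_σ = S_{i₁} ∘ ⋯ ∘ S_{i_k}` for `σ = i₁ ⋯ i_k`. -/
def SW (lam : ℝ) (p : Fin m → ℕ) (b : Fin m → ℝ) (σ : List (Fin m)) : ℝ → ℝ :=
  σ.foldr (fun i f => Smap lam p b i ∘ f) id

/-- `b_σ`, the translation part of `S_σ`. -/
def wordB (lam : ℝ) (p : Fin m → ℕ) (b : Fin m → ℝ) (σ : List (Fin m)) : ℝ :=
  SW lam p b σ 0

/-- `B = {0, b₁, …, b_m}`. -/
def Bset (b : Fin m → ℝ) : Set ℝ := insert 0 (Set.range b)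

/-- `B − B`. -/
def BB (b : Fin m → ℝ) : Set ℝ := {x | ∃ u ∈ Bset b, ∃ v ∈ Bset b, x = u - v}

/-- `max_i |b_i|`. -/
def bmax (b : Fin m → ℝ) : ℝ := ⨆ i, |b i|

/-- The set `𝒞`. -/
def Cset (lam : ℝ) (b : Fin m → ℝ) (T : ℕ) : Set ℝ :=
  {x | |x| ≤ (1 + lam ^ (1 - (T : ℤ))) * bmax b / (1 - lam) ∧
    ∃ R : ℝ[X], (∀ n, R.coeff n ∈ BB b) ∧ lam ^ (2 - (T : ℤ)) * x = R.eval lam⁻¹}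

/-- The vertex set `Ξ = {n ∈ ℤ : |n| ≤ T−1} × 𝒞`. -/
def Xi (lam : ℝ) (b : Fin m → ℝ) (T : ℕ) : Set (ℤ × ℝ) :=
  {v | |v.1| ≤ (T : ℤ) - 1 ∧ v.2 ∈ Cset lam b T}

/-- The open set condition. -/
def OSC (lam : ℝ) (p : Fin m → ℕ) (b : Fin m → ℝ) : Prop :=
  ∃ U : Set ℝ, U.Nonempty ∧ IsOpen U ∧ (⋃ i, Smap lam p b i '' U) ⊆ U ∧
    ∀ i j : Fin m, i ≠ j → Smap lam p b i '' U ∩ Smap lam p b j '' U = ∅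

/-- The strong separation condition for the attractor `E`. -/
def SSC (lam : ℝ) (p : Fin m → ℕ) (b : Fin m → ℝ) (E : Set ℝ) : Prop :=
  ∀ i j : Fin m, i ≠ j → Smap lam p b i '' E ∩ Smap lam p b j '' E = ∅

/-- Group law on `ℤ × ℝ`: `(p₁,c₁)·(p₂,c₂) = (p₁+p₂, λ^{p₁} c₂ + c₁)`. -/
def gmul (lam : ℝ) (u v : ℤ × ℝ) : ℤ × ℝ := (u.1 + v.1, lam ^ u.1 * v.2 + u.2)

/-- Inverse for the group law: `(p,c)⁻¹ = (−p, −λ^{−p} c)`. -/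
def ginv (lam : ℝ) (u : ℤ × ℝ) : ℤ × ℝ := (-u.1, -(lam ^ (-u.1) * u.2))

/-- The group element `(p_σ, b_σ)` associated to a finite word `σ`. -/
def elem (lam : ℝ) (p : Fin m → ℕ) (b : Fin m → ℝ) (σ : List (Fin m)) : ℤ × ℝ :=
  ((wordP p σ : ℤ), wordB lam p b σ)

/-- The sequence `(q_k, c_k)` with the recursive structure w.r.t. `({α_k}, {β_k})`:
`recSeq … k = (q_{k+1}, c_{k+1})`, i.e. index `k` corresponds to `(q_{k+1}, c_{k+1})`. -/
def recSeq (lam : ℝ) (p : Fin m → ℕ) (b : Fin m → ℝ) (α β : ℕ → List (Fin m)) : ℕ → ℤ × ℝ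
  | 0 => gmul lam (ginv lam (elem lam p b (β 0))) (elem lam p b (α 0))
  | (k+1) => gmul lam (ginv lam (elem lam p b (β (k+1))))
      (gmul lam (recSeq lam p b α β k) (elem lam p b (α (k+1))))

/-- The edge relation of the directed graph `G` on `Ξ`. -/
def edge (lam : ℝ) (p : Fin m → ℕ) (b : Fin m → ℝ) (T : ℕ) (u v : ℤ × ℝ) : Prop :=
  u ∈ Xi lam b T ∧ v ∈ Xi lam b T ∧
    ∃ α β : List (Fin m), 1 ≤ wordP p α ∧ wordP p α ≤ 2 * T - 1 ∧
      1 ≤ wordP p β ∧ wordP p β ≤ 2 * T - 1 ∧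
      v.1 = (wordP p α : ℤ) + u.1 - (wordP p β : ℤ) ∧
      v.2 = lam ^ (-(wordP p β : ℤ)) * u.2 + lam ^ (u.1 - (wordP p β : ℤ)) * wordB lam p b α
        - lam ^ (-(wordP p β : ℤ)) * wordB lam p b β

/-- `Λ = Ξ ∩ {(p_j − p_i, λ^{−p_i}(b_j − b_i)) : i ≠ j}`. -/
def Lam (lam : ℝ) (p : Fin m → ℕ) (b : Fin m → ℝ) (T : ℕ) : Set (ℤ × ℝ) :=
  Xi lam b T ∩ {v | ∃ i j : Fin m, i ≠ j ∧
    v = ((p j : ℤ) - (p i : ℤ), lam ^ (-(p i : ℤ)) * (b j - b i))}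

/-- The length-`k` prefix of an infinite word `ω`. -/
def prefixList (ω : ℕ → Fin m) (k : ℕ) : List (Fin m) := (List.range k).map ω

/-!
The open set condition holds exactly when there are no exact overlaps, i.e. when `σ ↦ (p_σ, b_σ)`
is injective. To see that injectivity suffices, take a ball `V` mapped into itself by every `S_i`.
If `S_σ(V)` and `S_τ(V)` meet at comparable scales, then `(p_τ, b_τ)⁻¹ · (p_σ, b_σ)` lies in a set
that is finite because `λ⁻¹` is Pisot (Garsia's argument), so by injectivity the number of
neighbours of a word is bounded. If `κ` has the maximal number of neighbours, then those of `σκ`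
are exactly the words `στ` with `τ` a neighbour of `κ`, and `⋃_σ S_{σκ}(V)` is an open set as
required.

The element `(q_{k+1}, c_{k+1})` is the relative position of `α₀ ⋯ α_k` and `β₀ ⋯ β_k`, so a
sequence ending at `(0, 0)` is an exact overlap. Conversely an exact overlap of two words starting
with different letters can be cut greedily into blocks whose partial scales differ by at most
`T - 1`; its partial relative positions then stay in `Ξ`.
-/

section Words

variable (lam : ℝ) (p : Fin m → ℕ) (b : Fin m → ℝ)

theorem wordP_cons (i : Fin m) (σ : List (Fin m)) : wordP p (i :: σ) = p i + wordP p σ := by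
  simp [wordP]

theorem wordP_singleton (i : Fin m) : wordP p [i] = p i := by
  simp [wordP]

theorem wordP_append (σ τ : List (Fin m)) : wordP p (σ ++ τ) = wordP p σ + wordP p τ := by
  simp [wordP]

theorem wordB_cons (i : Fin m) (σ : List (Fin m)) :
    wordB lam p b (i :: σ) = lam ^ p i * wordB lam p b σ + b i := rfl

theorem SW_append (σ τ : List (Fin m)) :
    SW lam p b (σ ++ τ) = SW lam p b σ ∘ SW lam p b τ := by
  induction σ with
  | nil => rfl
  | cons i σ ih => exact congrArg (Smap lam p b i ∘ ·) ih

theorem SW_apply (σ : List (Fin m)) (x : ℝ) :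
    SW lam p b σ x = lam ^ wordP p σ * x + wordB lam p b σ := by
  induction σ with
  | nil => simp [wordP, wordB, SW]
  | cons i σ ih =>
    calc SW lam p b (i :: σ) x = lam ^ p i * SW lam p b σ x + b i := rfl
      _ = lam ^ wordP p (i :: σ) * x + wordB lam p b (i :: σ) := by
        rw [ih, wordP_cons, wordB_cons, pow_add]; ring

variable {lam p b}

theorem mapsTo_SW {V : Set ℝ} (hV : ∀ i, Set.MapsTo (Smap lam p b i) V V) (σ : List (Fin m)) :
    Set.MapsTo (SW lam p b σ) V V := by
  induction σ with
  | nil => exact Set.mapsTo_id V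
  | cons i σ ih => exact (hV i).comp ih

theorem isOpenMap_SW (hlam : lam ≠ 0) (σ : List (Fin m)) : IsOpenMap (SW lam p b σ) := by
  rw [funext (SW_apply lam p b σ)]
  exact ((Homeomorph.mulLeft₀ _ (pow_ne_zero (wordP p σ) hlam)).trans
    (Homeomorph.addRight (wordB lam p b σ))).isOpenMap

theorem elem_append (σ τ : List (Fin m)) :
    elem lam p b (σ ++ τ) = gmul lam (elem lam p b σ) (elem lam p b τ) := by
  have hB : wordB lam p b (σ ++ τ) = lam ^ wordP p σ * wordB lam p b τ + wordB lam p b σ := by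
    rw [← SW_apply, wordB, SW_append]; rfl
  simp [elem, gmul, wordP_append, hB]

theorem SW_eq_of_elem_eq {σ τ : List (Fin m)} (h : elem lam p b σ = elem lam p b τ) :
    SW lam p b σ = SW lam p b τ := by
  obtain ⟨hP, hB⟩ := Prod.ext_iff.1 h
  funext x
  rw [SW_apply, SW_apply, Nat.cast_injective hP, show wordB lam p b σ = wordB lam p b τ from hB]

end Words

section Group

variable {lam : ℝ}

theorem gmul_assoc (hlam : lam ≠ 0) (u v w : ℤ × ℝ) :
    gmul lam (gmul lam u v) w = gmul lam u (gmul lam v w) := by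
  simp only [gmul, Prod.mk.injEq, zpow_add₀ hlam]
  constructor <;> ring

theorem ginv_gmul_rev (hlam : lam ≠ 0) (u v : ℤ × ℝ) :
    ginv lam (gmul lam u v) = gmul lam (ginv lam v) (ginv lam u) := by
  simp only [gmul, ginv, Prod.mk.injEq, neg_add, zpow_add₀ hlam, zpow_neg]
  constructor
  · ring
  · field_simp
    ring

theorem gmul_right_injective (hlam : lam ≠ 0) (u : ℤ × ℝ) : Function.Injective (gmul lam u) := by
  intro v w h
  simp only [gmul, Prod.mk.injEq, add_right_inj, add_left_inj,
    mul_right_inj' (zpow_ne_zero u.1 hlam)] at h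
  exact Prod.ext h.1 h.2

theorem ginv_gmul_self (u : ℤ × ℝ) : gmul lam (ginv lam u) u = (0, 0) := by
  simp [gmul, ginv]

theorem ginv_gmul_eq_zero_iff (hlam : lam ≠ 0) (u v : ℤ × ℝ) :
    gmul lam (ginv lam u) v = (0, 0) ↔ v = u := by
  rw [← ginv_gmul_self u, (gmul_right_injective hlam _).eq_iff]

end Group

section RelativePosition

variable {lam : ℝ} {p : Fin m → ℕ} {b : Fin m → ℝ}

/-- The position of the cylinder of `σ` relative to that of `τ`: the group element
`(p_τ, b_τ)⁻¹ · (p_σ, b_σ)`, which represents the affine map `S_τ⁻¹ ∘ S_σ`. -/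
def relPos (lam : ℝ) (p : Fin m → ℕ) (b : Fin m → ℝ) (σ τ : List (Fin m)) : ℤ × ℝ :=
  gmul lam (ginv lam (elem lam p b τ)) (elem lam p b σ)

theorem relPos_eq (σ τ : List (Fin m)) :
    relPos lam p b σ τ = ((wordP p σ : ℤ) - wordP p τ,
      lam ^ (-(wordP p τ : ℤ)) * (wordB lam p b σ - wordB lam p b τ)) := by
  simp only [relPos, gmul, ginv, elem, Prod.mk.injEq]
  constructor <;> ring

theorem relPos_append (hlam : lam ≠ 0) (σ τ α β : List (Fin m)) :
    relPos lam p b (σ ++ α) (τ ++ β) =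
      gmul lam (ginv lam (elem lam p b β)) (gmul lam (relPos lam p b σ τ) (elem lam p b α)) := by
  simp only [relPos, elem_append, ginv_gmul_rev hlam, gmul_assoc hlam]

theorem relPos_snd_eq (hlam : lam ≠ 0) {σ τ : List (Fin m)} {x y : ℝ}
    (h : SW lam p b σ x = SW lam p b τ y) :
    (relPos lam p b σ τ).2 = y - lam ^ ((wordP p σ : ℤ) - wordP p τ) * x := by
  rw [SW_apply, SW_apply] at h
  rw [relPos_eq, zpow_sub₀ hlam, zpow_neg, zpow_natCast, zpow_natCast]
  field_simp
  linarith

end RelativePosition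

section Concat

variable {lam : ℝ} {p : Fin m → ℕ} {b : Fin m → ℝ}

/-- The word `α₀ α₁ ⋯ α_k`; note that `k + 1` words are concatenated. -/
def concat (α : ℕ → List (Fin m)) (k : ℕ) : List (Fin m) := (List.range (k + 1)).flatMap α

/-- The sequence of words `a, α₀, α₁, …`. -/
def seqCons (a : List (Fin m)) (α : ℕ → List (Fin m)) : ℕ → List (Fin m)
  | 0 => a
  | k + 1 => α k

theorem concat_zero (α : ℕ → List (Fin m)) : concat α 0 = α 0 := by
  simp [concat]

theorem concat_succ (α : ℕ → List (Fin m)) (k : ℕ) :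
    concat α (k + 1) = concat α k ++ α (k + 1) := by
  rw [concat, List.range_succ, List.flatMap_append, List.flatMap_singleton]
  rfl

theorem concat_seqCons_succ (a : List (Fin m)) (α : ℕ → List (Fin m)) (k : ℕ) :
    concat (seqCons a α) (k + 1) = a ++ concat α k := by
  rw [concat, List.range_succ_eq_map, List.flatMap_cons, List.flatMap_map]
  rfl

theorem concat_prefix (α : ℕ → List (Fin m)) {k M : ℕ} (h : k ≤ M) :
    concat α k <+: concat α M := by
  induction M, h using Nat.le_induction with
  | base => exact List.prefix_rfl
  | succ M _ ih => exact ih.trans (concat_succ α M ▸ List.prefix_append _ _)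

theorem recSeq_eq_relPos (hlam : lam ≠ 0) (α β : ℕ → List (Fin m)) (k : ℕ) :
    recSeq lam p b α β k = relPos lam p b (concat α k) (concat β k) := by
  induction k with
  | zero => rw [concat_zero, concat_zero]; rfl
  | succ k ih => rw [recSeq, ih, concat_succ, concat_succ, relPos_append hlam]

theorem recSeq_eq_zero_iff (hlam : lam ≠ 0) (α β : ℕ → List (Fin m)) (k : ℕ) :
    recSeq lam p b α β k = (0, 0) ↔
      elem lam p b (concat α k) = elem lam p b (concat β k) := by
  rw [recSeq_eq_relPos hlam, relPos, ginv_gmul_eq_zero_iff hlam]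

end Concat

section Bounds

variable {lam : ℝ} {p : Fin m → ℕ} {b : Fin m → ℝ}

theorem le_bmax (b : Fin m → ℝ) (i : Fin m) : |b i| ≤ bmax b :=
  le_ciSup (f := fun i => |b i|) (Set.finite_range _).bddAbove i

theorem bmax_nonneg (b : Fin m → ℝ) : 0 ≤ bmax b :=
  Real.iSup_nonneg fun _ => abs_nonneg _

theorem abs_Smap_le (hlam0 : 0 ≤ lam) (hlam1 : lam ≤ 1) (hp : ∀ i, 1 ≤ p i) (i : Fin m) (x : ℝ) :
    |Smap lam p b i x| ≤ lam * |x| + bmax b := by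
  have hpow : |lam ^ p i| ≤ lam := by
    rw [abs_of_nonneg (pow_nonneg hlam0 _)]
    exact pow_le_of_le_one hlam0 hlam1 (Nat.one_le_iff_ne_zero.1 (hp i))
  calc |lam ^ p i * x + b i| ≤ |lam ^ p i| * |x| + |b i| := by
        rw [← abs_mul]; exact abs_add_le _ _
    _ ≤ lam * |x| + bmax b := by gcongr; exact le_bmax b i

theorem abs_wordB_le (hlam0 : 0 ≤ lam) (hlam1 : lam < 1) (hp : ∀ i, 1 ≤ p i)
    (σ : List (Fin m)) : |wordB lam p b σ| ≤ bmax b / (1 - lam) := by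
  have hpos : 0 < 1 - lam := sub_pos.2 hlam1
  have hmaps (i : Fin m) :
      Set.MapsTo (Smap lam p b i) {x | |x| ≤ bmax b / (1 - lam)}
        {x | |x| ≤ bmax b / (1 - lam)} := by
    intro x (hx : |x| ≤ bmax b / (1 - lam))
    change |Smap lam p b i x| ≤ bmax b / (1 - lam)
    rw [le_div_iff₀ hpos] at hx ⊢
    nlinarith [abs_Smap_le (b := b) hlam0 hlam1.le hp i x]
  refine mapsTo_SW hmaps σ ?_
  simpa using div_nonneg (bmax_nonneg b) hpos.le

theorem mapsTo_Smap_ball (hlam0 : 0 ≤ lam) (hlam1 : lam < 1) (hp : ∀ i, 1 ≤ p i) {G : ℝ}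
    (hG : bmax b / (1 - lam) < G) (i : Fin m) :
    Set.MapsTo (Smap lam p b i) (Metric.ball 0 G) (Metric.ball 0 G) := by
  intro x hx
  rw [mem_ball_zero_iff, Real.norm_eq_abs] at hx ⊢
  rw [div_lt_iff₀ (sub_pos.2 hlam1)] at hG
  nlinarith [abs_Smap_le (b := b) hlam0 hlam1.le hp i x]

end Bounds

section Vertices

variable {lam : ℝ} {p : Fin m → ℕ} {b : Fin m → ℝ} {T : ℕ}

/-- The vertex set `Ξ` with an arbitrary bound `D` on the second coordinate in place of
`(1 + λ^{1-T}) max|b_i| / (1 - λ)`. -/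
def vertexSet (lam : ℝ) (b : Fin m → ℝ) (T : ℕ) (D : ℝ) : Set (ℤ × ℝ) :=
  {v | |v.1| ≤ (T : ℤ) - 1 ∧ |v.2| ≤ D ∧
    ∃ R : ℝ[X], (∀ n, R.coeff n ∈ BB b) ∧ lam ^ (2 - (T : ℤ)) * v.2 = R.eval lam⁻¹}

theorem Xi_eq_vertexSet :
    Xi lam b T = vertexSet lam b T ((1 + lam ^ (1 - (T : ℤ))) * (bmax b / (1 - lam))) := by
  rw [← mul_div_assoc]; rfl

theorem exists_eval_eq_wordB (hlam : lam ≠ 0) (hp : ∀ i, 1 ≤ p i) (σ : List (Fin m)) {N : ℕ}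
    (hN : wordP p σ ≤ N) :
    ∃ Q : ℝ[X], (∀ n, Q.coeff n ∈ Bset b) ∧ Q.degree < N ∧
      Q.eval lam⁻¹ = lam ^ (1 - (N : ℤ)) * wordB lam p b σ := by
  induction σ generalizing N with
  | nil => exact ⟨0, by simp [Bset], by simp [bot_lt_iff_ne_bot], by simp [wordB, SW]⟩
  | cons i σ ih =>
    have hpi := hp i
    rw [wordP_cons] at hN
    obtain ⟨Q, hQ, hdeg, heval⟩ := ih (N := N - p i) (by omega)
    have hdeg' : Q.degree < ((N - 1 : ℕ) : WithBot ℕ) :=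
      hdeg.trans_le (by exact_mod_cast Nat.sub_le_sub_left hpi N)
    refine ⟨monomial (N - 1) (b i) + Q, fun n => ?_, ?_, ?_⟩
    · rw [coeff_add, coeff_monomial]
      split_ifs with hn
      · rw [← hn, coeff_eq_zero_of_degree_lt hdeg', add_zero]
        exact Or.inr ⟨i, rfl⟩
      · rw [zero_add]
        exact hQ n
    · have hlt : ((N - 1 : ℕ) : WithBot ℕ) < N := by exact_mod_cast (by omega : N - 1 < N)
      exact (degree_add_le _ _).trans_lt
        (max_lt ((degree_monomial_le _ _).trans_lt hlt) (hdeg'.trans hlt))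
    · have hpow : lam⁻¹ ^ (N - 1) = lam ^ (1 - (N : ℤ)) := by
        rw [inv_pow, ← zpow_natCast, ← zpow_neg]; congr 1; omega
      have hpow' : lam ^ (1 - ((N - p i : ℕ) : ℤ)) = lam ^ (1 - (N : ℤ)) * lam ^ p i := by
        rw [← zpow_natCast lam (p i), ← zpow_add₀ hlam]; congr 1; omega
      rw [eval_add, eval_monomial, heval, hpow, hpow', wordB_cons]
      ring

theorem relPos_mem_vertexSet (hlam0 : 0 < lam) (hlam1 : lam ≤ 1) (hp : ∀ i, 1 ≤ p i)
    {σ τ : List (Fin m)} (hlag : |(wordP p σ : ℤ) - wordP p τ| ≤ (T : ℤ) - 1) {x y G : ℝ}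
    (hx : |x| ≤ G) (hy : |y| ≤ G) (h : SW lam p b σ x = SW lam p b τ y) :
    relPos lam p b σ τ ∈ vertexSet lam b T ((1 + lam ^ (1 - (T : ℤ))) * G) := by
  have hlam := hlam0.ne'
  have hlag' := abs_le.1 hlag
  refine ⟨by rwa [relPos_eq], ?_, ?_⟩
  · have hzpow : lam ^ ((wordP p σ : ℤ) - wordP p τ) ≤ lam ^ (1 - (T : ℤ)) :=
      zpow_le_zpow_right_of_le_one₀ hlam0 hlam1 (by omega)
    calc |(relPos lam p b σ τ).2|
        = |y - lam ^ ((wordP p σ : ℤ) - wordP p τ) * x| := by rw [relPos_snd_eq hlam h]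
      _ ≤ |y| + lam ^ ((wordP p σ : ℤ) - wordP p τ) * |x| := by
          refine (abs_sub _ _).trans_eq ?_
          rw [abs_mul, abs_of_pos (zpow_pos hlam0 _)]
      _ ≤ G + lam ^ (1 - (T : ℤ)) * G := by gcongr
      _ = (1 + lam ^ (1 - (T : ℤ))) * G := by ring
  · obtain ⟨Q, hQ, -, hQeval⟩ :=
      exists_eval_eq_wordB (b := b) (N := T + wordP p τ - 1) hlam hp σ (by omega)
    obtain ⟨R, hR, -, hReval⟩ :=
      exists_eval_eq_wordB (b := b) (N := T + wordP p τ - 1) hlam hp τ (by omega)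
    refine ⟨Q - R, fun n => ⟨_, hQ n, _, hR n, coeff_sub _ _ _⟩, ?_⟩
    rw [relPos_eq, eval_sub, hQeval, hReval, ← mul_sub, ← mul_assoc, ← zpow_add₀ hlam]
    congr 2
    omega

end Vertices

section Pisot

theorem norm_eval_le_of_norm_lt_one {𝕜 : Type*} [NormedField 𝕜] {z : 𝕜} (hz : ‖z‖ < 1)
    {Q : 𝕜[X]} {C : ℝ} (hQ : ∀ n, ‖Q.coeff n‖ ≤ C) : ‖Q.eval z‖ ≤ C * (1 - ‖z‖)⁻¹ := by
  have hC : 0 ≤ C := (norm_nonneg _).trans (hQ 0)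
  calc ‖Q.eval z‖ ≤ ∑ n ∈ Finset.range (Q.natDegree + 1), ‖Q.coeff n * z ^ n‖ := by
        rw [eval_eq_sum_range]; exact norm_sum_le _ _
    _ ≤ ∑ n ∈ Finset.range (Q.natDegree + 1), C * ‖z‖ ^ n := by
        gcongr with n
        rw [norm_mul, norm_pow]
        gcongr
        exact hQ n
    _ = C * ∑ n ∈ Finset.range (Q.natDegree + 1), ‖z‖ ^ n := (Finset.mul_sum _ _ _).symm
    _ ≤ C * (1 - ‖z‖)⁻¹ := by
        gcongr
        rw [← tsum_geometric_of_lt_one (norm_nonneg z) hz]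
        exact (summable_geometric_of_lt_one (norm_nonneg z) hz).sum_le_tsum _
          fun _ _ => by positivity

theorem finite_aeval_of_conjugates_lt_one {K : Type*} [Field K] [NumberField K] {g : K}
    (hg : IsIntegral ℤ g) (φ₀ : K →+* ℂ) (hφ₀ : ∀ φ : K →+* ℂ, φ g ≠ φ₀ g → ‖φ g‖ < 1)
    (C D : ℝ) :
    {x : K | ‖φ₀ x‖ ≤ D ∧ ∃ Z : ℤ[X], (∀ n, |(Z.coeff n : ℝ)| ≤ C) ∧ aeval g Z = x}.Finite := by
  obtain ⟨D', hD'⟩ := Finite.exists_le fun φ : K →+* ℂ => C * (1 - ‖φ g‖)⁻¹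
  refine (NumberField.Embeddings.finite_of_norm_le K ℂ (max D D')).subset ?_
  rintro _ ⟨hx, Z, hZ, rfl⟩
  have hmap (φ : K →+* ℂ) : φ (aeval g Z) = aeval (φ g) Z :=
    (aeval_algHom_apply φ.toIntAlgHom g Z).symm
  refine ⟨adjoin_le_integralClosure hg (aeval_mem_adjoin_singleton ℤ g), fun φ => ?_⟩
  by_cases hφ : φ g = φ₀ g
  · rw [hmap φ, hφ, ← hmap φ₀]
    exact hx.trans (le_max_left _ _)
  · have hcoeff (n : ℕ) : ‖(Z.map (algebraMap ℤ ℂ)).coeff n‖ ≤ C := by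
      simpa [Complex.norm_intCast] using hZ n
    rw [hmap φ, ← eval_map_algebraMap]
    exact (norm_eval_le_of_norm_lt_one (hφ₀ φ hφ) hcoeff).trans ((hD' φ).trans (le_max_right _ _))

theorem IsPisot.finite_aeval {θ : ℝ} (hθ : IsPisot θ) (C D : ℝ) :
    {x : ℝ | |x| ≤ D ∧ ∃ Z : ℤ[X], (∀ n, |(Z.coeff n : ℝ)| ≤ C) ∧ aeval θ Z = x}.Finite := by
  obtain ⟨-, hint, hconj⟩ := hθ
  let K := IntermediateField.adjoin ℚ {θ}
  have : FiniteDimensional ℚ K := IntermediateField.adjoin.finiteDimensional hint.tower_top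
  have : NumberField K := ⟨⟩
  let g : K := IntermediateField.AdjoinSimple.gen ℚ θ
  have hg : algebraMap K ℝ g = θ := IntermediateField.AdjoinSimple.algebraMap_gen ℚ θ
  have hinj : Function.Injective (algebraMap K ℝ) := (algebraMap K ℝ).injective
  have hgint : IsIntegral ℤ g := by rwa [← isIntegral_algebraMap_iff hinj, hg]
  have hroot : aeval g (minpoly ℤ θ) = 0 := by
    rw [← hg, minpoly.algebraMap_eq hinj, minpoly.aeval]
  let φ₀ : K →+* ℂ := Complex.ofRealHom.comp (algebraMap K ℝ)
  have hφ₀ (φ : K →+* ℂ) (hφ : φ g ≠ φ₀ g) : ‖φ g‖ < 1 := by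
    refine hconj (φ g) ?_ fun h => hφ ?_
    · rw [show φ g = φ.toIntAlgHom g from rfl, aeval_algHom_apply, hroot, map_zero]
    · rw [h, ← hg]; rfl
  refine ((finite_aeval_of_conjugates_lt_one hgint φ₀ hφ₀ C D).image (algebraMap K ℝ)).subset ?_
  rintro _ ⟨hx, Z, hZ, rfl⟩
  have hmap : algebraMap K ℝ (aeval g Z) = aeval θ Z := by rw [← aeval_algebraMap_apply, hg]
  refine ⟨aeval g Z, ⟨?_, Z, hZ, rfl⟩, hmap⟩
  rwa [RingHom.comp_apply, hmap, Complex.ofRealHom_eq_coe, Complex.norm_real, Real.norm_eq_abs]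

theorem exists_intCast_eq_of_mem_BB {b : Fin m → ℝ} (hbZ : ∀ i, ∃ z : ℤ, b i = z) {x : ℝ}
    (hx : x ∈ BB b) : ∃ z : ℤ, z = x ∧ |(z : ℝ)| ≤ 2 * bmax b := by
  have hBset : ∀ u ∈ Bset b, ∃ z : ℤ, z = u ∧ |(z : ℝ)| ≤ bmax b := by
    rintro _ (rfl | ⟨i, rfl⟩)
    · exact ⟨0, by simp, by simpa using bmax_nonneg b⟩
    · obtain ⟨z, hz⟩ := hbZ i
      exact ⟨z, hz.symm, hz ▸ le_bmax b i⟩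
  obtain ⟨u, hu, v, hv, rfl⟩ := hx
  obtain ⟨z, rfl, hz⟩ := hBset u hu
  obtain ⟨w, rfl, hw⟩ := hBset v hv
  refine ⟨z - w, Int.cast_sub z w, ?_⟩
  rw [Int.cast_sub]
  linarith [abs_sub (z : ℝ) w]

theorem vertexSet_finite {lam : ℝ} (hlam : lam ≠ 0) (hPisot : IsPisot lam⁻¹) {b : Fin m → ℝ}
    (hbZ : ∀ i, ∃ z : ℤ, b i = z) (T : ℕ) (D : ℝ) : (vertexSet lam b T D).Finite := by
  have hne : lam ^ (2 - (T : ℤ)) ≠ 0 := zpow_ne_zero _ hlam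
  have hfin := (hPisot.finite_aeval (2 * bmax b) (|lam ^ (2 - (T : ℤ))| * D)).preimage
    (mul_right_injective₀ hne).injOn
  refine ((Set.finite_Icc (-((T : ℤ) - 1)) (T - 1)).prod hfin).subset ?_
  rintro v ⟨hq, hD, R, hR, hReval⟩
  choose z hz hzle using fun n => exists_intCast_eq_of_mem_BB hbZ (hR n)
  obtain ⟨Z, rfl⟩ : ∃ Z : ℤ[X], Z.map (algebraMap ℤ ℝ) = R :=
    (mem_lifts R).1 ((lifts_iff_coeff_lifts R).2 fun n => ⟨z n, hz n⟩)
  refine ⟨abs_le.1 hq, ?_, Z, fun n => ?_, ?_⟩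
  · rw [abs_mul]
    gcongr
  · simpa [hz n] using hzle n
  · rw [← eval_map_algebraMap, ← hReval]

end Pisot

section OpenSetCondition

variable {lam : ℝ} {p : Fin m → ℕ} {b : Fin m → ℝ} {T : ℕ}

theorem elem_cons_ne_elem_nil (hp : ∀ i, 1 ≤ p i) (i : Fin m) (σ : List (Fin m)) :
    elem lam p b (i :: σ) ≠ elem lam p b [] := by
  intro h
  have hi := hp i
  have hP : wordP p (i :: σ) = wordP p [] := Nat.cast_injective (congrArg Prod.fst h)
  rw [wordP_cons, show wordP p [] = 0 from rfl] at hP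
  omega

theorem exists_ne_head_of_not_injective_elem (hlam : lam ≠ 0) (hp : ∀ i, 1 ≤ p i)
    (h : ¬ Function.Injective (elem lam p b)) :
    ∃ i j u v, i ≠ j ∧ elem lam p b (i :: u) = elem lam p b (j :: v) := by
  contrapose! h
  intro σ
  induction σ with
  | nil =>
    rintro (_ | ⟨j, τ⟩) he
    · rfl
    · exact absurd he.symm (elem_cons_ne_elem_nil hp j τ)
  | cons i σ ih =>
    rintro (_ | ⟨j, τ⟩) he
    · exact absurd he (elem_cons_ne_elem_nil hp i σ)
    · obtain rfl : i = j := by_contra fun hij => h i j σ τ hij he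
      rw [← List.singleton_append, ← List.singleton_append (l := τ), elem_append, elem_append] at he
      rw [ih (gmul_right_injective hlam _ he)]

theorem OSC.injective_elem (hlam : lam ≠ 0) (hp : ∀ i, 1 ≤ p i) (h : OSC lam p b) :
    Function.Injective (elem lam p b) := by
  obtain ⟨U, ⟨x, hx⟩, -, hU, hdisj⟩ := h
  by_contra hinj
  obtain ⟨i, j, u, v, hij, he⟩ := exists_ne_head_of_not_injective_elem hlam hp hinj
  have hmaps (k : Fin m) : Set.MapsTo (Smap lam p b k) U U := fun y hy =>
    hU (Set.mem_iUnion.2 ⟨k, y, hy, rfl⟩)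
  refine Set.eq_empty_iff_forall_notMem.1 (hdisj i j hij) (SW lam p b (i :: u) x) ⟨?_, ?_⟩
  · exact ⟨SW lam p b u x, mapsTo_SW hmaps u hx, rfl⟩
  · rw [SW_eq_of_elem_eq he]
    exact ⟨SW lam p b v x, mapsTo_SW hmaps v hx, rfl⟩

/-- The words `τ` of scale comparable to that of `κ` for which `S_τ(V)` meets `S_κ(V)`. -/
def neighbors (lam : ℝ) (p : Fin m → ℕ) (b : Fin m → ℝ) (T : ℕ) (V : Set ℝ)
    (κ : List (Fin m)) : Set (List (Fin m)) :=
  {τ | |(wordP p τ : ℤ) - wordP p κ| ≤ (T : ℤ) - 1 ∧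
    (SW lam p b τ '' V ∩ SW lam p b κ '' V).Nonempty}

theorem image_append_neighbors_subset (V : Set ℝ) (σ κ : List (Fin m)) :
    (σ ++ ·) '' neighbors lam p b T V κ ⊆ neighbors lam p b T V (σ ++ κ) := by
  rintro _ ⟨τ, ⟨hlag, hmeet⟩, rfl⟩
  refine ⟨?_, ?_⟩
  · simpa only [wordP_append, Nat.cast_add, add_sub_add_left_eq_sub] using hlag
  · rw [SW_append, SW_append, Set.image_comp, Set.image_comp]
    exact (hmeet.image (SW lam p b σ)).mono (Set.image_inter_subset _ _ _)

theorem exists_ncard_neighbors_le (hlam0 : 0 < lam) (hlam1 : lam ≤ 1) (hPisot : IsPisot lam⁻¹)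
    (hp : ∀ i, 1 ≤ p i) (hbZ : ∀ i, ∃ z : ℤ, b i = z)
    (hinj : Function.Injective (elem lam p b)) (T : ℕ) (G : ℝ) :
    ∃ N : ℕ, ∀ κ, (neighbors lam p b T (Metric.ball 0 G) κ).Finite ∧
      (neighbors lam p b T (Metric.ball 0 G) κ).ncard ≤ N := by
  have hfin := vertexSet_finite hlam0.ne' hPisot hbZ T ((1 + lam ^ (1 - (T : ℤ))) * G)
  refine ⟨(vertexSet lam b T ((1 + lam ^ (1 - (T : ℤ))) * G)).ncard, fun κ => ?_⟩
  have hmaps : ∀ τ ∈ neighbors lam p b T (Metric.ball 0 G) κ,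
      relPos lam p b τ κ ∈ vertexSet lam b T ((1 + lam ^ (1 - (T : ℤ))) * G) := by
    rintro τ ⟨hlag, _, ⟨x, hx, rfl⟩, y, hy, hxy⟩
    exact relPos_mem_vertexSet hlam0 hlam1 hp hlag (mem_ball_zero_iff.1 hx).le
      (mem_ball_zero_iff.1 hy).le hxy.symm
  have hrel : Function.Injective (relPos lam p b · κ) :=
    (gmul_right_injective hlam0.ne' _).comp hinj
  exact ⟨Set.Finite.of_injOn hmaps hrel.injOn hfin,
    Set.ncard_le_ncard_of_injOn _ hmaps hrel.injOn hfin⟩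

theorem exists_neighbors_append_eq {V : Set ℝ} {N : ℕ}
    (hN : ∀ κ, (neighbors lam p b T V κ).Finite ∧ (neighbors lam p b T V κ).ncard ≤ N) :
    ∃ κ, ∀ σ, neighbors lam p b T V (σ ++ κ) = (σ ++ ·) '' neighbors lam p b T V κ := by
  have hbdd : BddAbove (Set.range fun κ => (neighbors lam p b T V κ).ncard) :=
    ⟨N, Set.forall_mem_range.2 fun κ => (hN κ).2⟩
  obtain ⟨κ, hκ⟩ := Nat.sSup_mem (Set.range_nonempty _) hbdd
  refine ⟨κ, fun σ => (Set.eq_of_subset_of_ncard_le (image_append_neighbors_subset V σ κ) ?_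
    (hN _).1).symm⟩
  rw [Set.ncard_image_of_injective _ (List.append_right_injective σ)]
  exact (le_csSup hbdd ⟨σ ++ κ, rfl⟩).trans_eq hκ.symm

theorem exists_prefix_wordP (hT1 : 1 ≤ T) (hpT : ∀ i, p i ≤ T) {σ : List (Fin m)} {n : ℕ}
    (hn : n ≤ wordP p σ) : ∃ ρ, ρ <+: σ ∧ n ≤ wordP p ρ ∧ wordP p ρ < n + T := by
  induction σ generalizing n with
  | nil => exact ⟨[], List.prefix_rfl, hn, Nat.add_pos_right n hT1⟩
  | cons i σ ih =>
    have hi := hpT i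
    rw [wordP_cons] at hn
    rcases Nat.eq_zero_or_pos n with rfl | hn0
    · exact ⟨[], List.nil_prefix, Nat.zero_le _, Nat.add_pos_right 0 hT1⟩
    rcases le_total n (p i) with hni | hni
    · have hsing : wordP p [i] = p i := wordP_singleton p i
      exact ⟨[i], List.prefix_append [i] σ, by omega, by omega⟩
    · obtain ⟨ρ, hρ, hle, hlt⟩ := ih (n := n - p i) (by omega)
      refine ⟨i :: ρ, (List.prefix_cons_inj i).2 hρ, ?_, ?_⟩ <;> rw [wordP_cons] <;> omega

theorem osc_of_neighbors_append_eq (hlam : lam ≠ 0) (hT1 : 1 ≤ T) (hpT : ∀ i, p i ≤ T)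
    {V : Set ℝ} (hVo : IsOpen V) (hVne : V.Nonempty)
    (hV : ∀ i, Set.MapsTo (Smap lam p b i) V V) {κ : List (Fin m)}
    (hκ : ∀ σ, neighbors lam p b T V (σ ++ κ) = (σ ++ ·) '' neighbors lam p b T V κ) :
    OSC lam p b := by
  have hle {i j : Fin m} {σ τ : List (Fin m)} {x y : ℝ} (hx : x ∈ V) (hy : y ∈ V)
      (hP : wordP p (i :: σ ++ κ) ≤ wordP p (j :: τ ++ κ))
      (h : SW lam p b (i :: σ ++ κ) x = SW lam p b (j :: τ ++ κ) y) : i = j := by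
    obtain ⟨ρ, ⟨ρ', hρ⟩, hPle, hPlt⟩ := exists_prefix_wordP hT1 hpT hP
    have hmem : ρ ∈ neighbors lam p b T V (i :: σ ++ κ) := by
      refine ⟨abs_le.2 (by omega), _, ⟨_, mapsTo_SW hV ρ' hy, rfl⟩, x, hx, ?_⟩
      rw [h, ← hρ, SW_append, Function.comp_apply]
    rw [hκ] at hmem
    obtain ⟨τ', -, rfl⟩ := hmem
    exact (List.cons.inj hρ).1
  refine ⟨⋃ σ, SW lam p b (σ ++ κ) '' V, ?_, ?_, ?_, fun i j hij => ?_⟩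
  · exact Set.nonempty_iUnion.2 ⟨[], hVne.image _⟩
  · exact isOpen_iUnion fun σ => isOpenMap_SW hlam _ V hVo
  · refine Set.iUnion_subset fun i => ?_
    rintro _ ⟨z, hz, rfl⟩
    obtain ⟨σ, x, hx, rfl⟩ := Set.mem_iUnion.1 hz
    exact Set.mem_iUnion.2 ⟨i :: σ, x, hx, rfl⟩
  · rw [Set.eq_empty_iff_forall_notMem]
    rintro _ ⟨⟨z, hz, rfl⟩, z', hz', heq⟩
    obtain ⟨σ, x, hx, rfl⟩ := Set.mem_iUnion.1 hz
    obtain ⟨τ, y, hy, rfl⟩ := Set.mem_iUnion.1 hz'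
    rcases le_total (wordP p (i :: σ ++ κ)) (wordP p (j :: τ ++ κ)) with hP | hP
    · exact hij (hle hx hy hP heq.symm)
    · exact hij (hle hy hx hP heq).symm

theorem osc_of_injective_elem (hlam0 : 0 < lam) (hlam1 : lam < 1) (hPisot : IsPisot lam⁻¹)
    (hp : ∀ i, 1 ≤ p i) (hbZ : ∀ i, ∃ z : ℤ, b i = z)
    (hinj : Function.Injective (elem lam p b)) : OSC lam p b := by
  obtain ⟨G, hG⟩ := exists_gt (bmax b / (1 - lam))
  have hG0 : 0 < G := (div_nonneg (bmax_nonneg b) (sub_pos.2 hlam1).le).trans_lt hG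
  have hpT (i : Fin m) : p i ≤ Finset.univ.sup p + 1 :=
    Nat.le_succ_of_le (Finset.le_sup (Finset.mem_univ i))
  obtain ⟨N, hN⟩ := exists_ncard_neighbors_le hlam0 hlam1.le hPisot hp hbZ hinj
    (Finset.univ.sup p + 1) G
  obtain ⟨κ, hκ⟩ := exists_neighbors_append_eq hN
  exact osc_of_neighbors_append_eq hlam0.ne' (Nat.le_add_left 1 _) hpT Metric.isOpen_ball
    (Metric.nonempty_ball.2 hG0) (mapsTo_Smap_ball hlam0.le hlam1 hp hG) hκ

theorem osc_iff_injective_elem (hlam0 : 0 < lam) (hlam1 : lam < 1) (hPisot : IsPisot lam⁻¹)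
    (hp : ∀ i, 1 ≤ p i) (hbZ : ∀ i, ∃ z : ℤ, b i = z) :
    OSC lam p b ↔ Function.Injective (elem lam p b) :=
  ⟨OSC.injective_elem hlam0.ne' hp, osc_of_injective_elem hlam0 hlam1 hPisot hp hbZ⟩

end OpenSetCondition

section BalancedFactorization

variable {lam : ℝ} {p : Fin m → ℕ} {b : Fin m → ℝ} {T : ℕ}

/-- The blocks `α₀, …, α_M` and `β₀, …, β_M` have admissible scales, and after an initial lag `q`
the scales of `α₀ ⋯ α_k` and `β₀ ⋯ β_k` never differ by more than `T - 1`. -/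
structure IsBalanced (p : Fin m → ℕ) (T : ℕ) (q : ℤ) (M : ℕ) (α β : ℕ → List (Fin m)) : Prop where
  wordP_left : ∀ k ≤ M, 1 ≤ wordP p (α k) ∧ wordP p (α k) ≤ 2 * T - 1
  wordP_right : ∀ k ≤ M, 1 ≤ wordP p (β k) ∧ wordP p (β k) ≤ 2 * T - 1
  abs_lag_le : ∀ k ≤ M, |q + wordP p (concat α k) - wordP p (concat β k)| ≤ (T : ℤ) - 1

theorem IsBalanced.symm {q : ℤ} {M : ℕ} {α β : ℕ → List (Fin m)} (h : IsBalanced p T q M α β) :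
    IsBalanced p T (-q) M β α where
  wordP_left := h.wordP_right
  wordP_right := h.wordP_left
  abs_lag_le k hk := by
    rw [← abs_neg]
    convert h.abs_lag_le k hk using 2
    ring

theorem IsBalanced.seqCons {q : ℤ} {M : ℕ} {α β : ℕ → List (Fin m)} {a c : List (Fin m)}
    (h : IsBalanced p T (q + wordP p a - wordP p c) M α β)
    (ha : 1 ≤ wordP p a ∧ wordP p a ≤ 2 * T - 1) (hc : 1 ≤ wordP p c ∧ wordP p c ≤ 2 * T - 1)
    (hlag : |q + wordP p a - wordP p c| ≤ (T : ℤ) - 1) :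
    IsBalanced p T q (M + 1) (seqCons a α) (seqCons c β) where
  wordP_left
    | 0, _ => ha
    | k + 1, hk => h.wordP_left k (Nat.le_of_succ_le_succ hk)
  wordP_right
    | 0, _ => hc
    | k + 1, hk => h.wordP_right k (Nat.le_of_succ_le_succ hk)
  abs_lag_le
    | 0, _ => by rwa [concat_zero, concat_zero]
    | k + 1, hk => by
      convert h.abs_lag_le k (Nat.le_of_succ_le_succ hk) using 2
      rw [concat_seqCons_succ, concat_seqCons_succ, wordP_append, wordP_append]
      push_cast
      ring

theorem exists_isBalanced_nil {l : Fin m} (hl : 1 ≤ p l) (hlT : p l ≤ T) {q : ℤ}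
    (hq : q ≤ (T : ℤ) - 1) {v : List (Fin m)} (h : wordP p v = q) :
    ∃ w M α β, concat α M = [] ++ w ∧ concat β M = v ++ w ∧ IsBalanced p T q M α β := by
  have hsing : wordP p [l] = p l := wordP_singleton p l
  have hvl := wordP_append p v [l]
  refine ⟨[l], 0, fun _ => [l], fun _ => v ++ [l], concat_zero _, concat_zero _, ?_, ?_, ?_⟩
  · intro _ _; omega
  · intro _ _; omega
  · intro k hk
    obtain rfl := Nat.le_zero.1 hk
    rw [concat_zero, concat_zero, abs_le]; omega

theorem exists_isBalanced (hp : ∀ i, 1 ≤ p i) (hpT : ∀ i, p i ≤ T) (l : Fin m) {q : ℤ}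
    (hq : |q| ≤ (T : ℤ) - 1) {u v : List (Fin m)} (h : (wordP p u : ℤ) + q = wordP p v) :
    ∃ w M α β, concat α M = u ++ w ∧ concat β M = v ++ w ∧ IsBalanced p T q M α β := by
  induction hn : u.length + v.length using Nat.strong_induction_on generalizing q u v with
  | _ n ih
  wlog hq0 : 0 ≤ q generalizing q u v
  · obtain ⟨w, M, α, β, hα, hβ, hbal⟩ :=
      this (q := -q) (by rwa [abs_neg]) (u := v) (v := u) (by omega) (by omega) (by omega)
    exact ⟨w, M, β, α, hβ, hα, neg_neg q ▸ hbal.symm⟩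
  have hq' := (abs_le.1 hq).2
  rcases u with _ | ⟨i, u⟩
  · exact exists_isBalanced_nil (hp l) (hpT l) hq' (by rw [← h]; simp [wordP])
  · have hi := hp i
    have hiT := hpT i
    have hsing : wordP p [i] = p i := wordP_singleton p i
    lift q to ℕ using hq0
    rw [wordP_cons] at h
    -- Overshooting the lag `q` by between `1` and `T` keeps the new lag `q + p_i - p_ρ` balanced.
    obtain ⟨ρ, ⟨v', rfl⟩, hle, hlt⟩ :=
      exists_prefix_wordP (p := p) (T := T) (σ := v) (n := q + 1) (by omega) hpT (by omega)
    have hlag : |(q : ℤ) + wordP p [i] - wordP p ρ| ≤ (T : ℤ) - 1 := abs_le.2 (by omega)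
    rw [wordP_append] at h
    have hρ : 0 < ρ.length := by
      refine List.length_pos_iff.2 fun hnil => ?_
      simp [hnil, wordP] at hle
    obtain ⟨w, M, α, β, hα, hβ, hbal⟩ :=
      ih (u.length + v'.length) (by simp at hn; omega) hlag (u := u) (v := v') (by omega) rfl
    refine ⟨w, M + 1, seqCons [i] α, seqCons ρ β, ?_, ?_,
      hbal.seqCons (by omega) (by omega) hlag⟩
    · rw [concat_seqCons_succ, hα]; rfl
    · rw [concat_seqCons_succ, hβ, List.append_assoc]

theorem exists_isBalanced_of_elem_eq (hp : ∀ i, 1 ≤ p i) (hpT : ∀ i, p i ≤ T) {i j : Fin m}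
    {u v : List (Fin m)} (h : elem lam p b (i :: u) = elem lam p b (j :: v)) :
    ∃ M, 1 ≤ M ∧ ∃ α β, IsBalanced p T 0 M α β ∧ α 0 = [i] ∧ β 0 = [j] ∧
      elem lam p b (concat α M) = elem lam p b (concat β M) := by
  have hP : wordP p (i :: u) = wordP p (j :: v) := Nat.cast_injective (congrArg Prod.fst h)
  have hi := hp i
  have hj := hp j
  have hiT := hpT i
  have hjT := hpT j
  have hsi : wordP p [i] = p i := wordP_singleton p i
  have hsj : wordP p [j] = p j := wordP_singleton p j
  rw [wordP_cons, wordP_cons] at hP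
  have hlag : |0 + (wordP p [i] : ℤ) - wordP p [j]| ≤ (T : ℤ) - 1 := abs_le.2 (by omega)
  obtain ⟨w, M, α, β, hα, hβ, hbal⟩ := exists_isBalanced hp hpT i hlag (u := u) (v := v) (by omega)
  refine ⟨M + 1, Nat.le_add_left 1 M, seqCons [i] α, seqCons [j] β,
    hbal.seqCons (by omega) (by omega) hlag, rfl, rfl, ?_⟩
  rw [concat_seqCons_succ, concat_seqCons_succ, hα, hβ, ← List.append_assoc, ← List.append_assoc,
    elem_append, elem_append (_ ++ v)]
  exact congrArg (gmul lam · _) h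

theorem IsBalanced.recSeq_mem_Xi (hlam0 : 0 < lam) (hlam1 : lam < 1) (hp : ∀ i, 1 ≤ p i) {M : ℕ}
    {α β : ℕ → List (Fin m)} (hbal : IsBalanced p T 0 M α β)
    (h : elem lam p b (concat α M) = elem lam p b (concat β M)) {k : ℕ} (hk : k ≤ M) :
    recSeq lam p b α β k ∈ Xi lam b T := by
  obtain ⟨u, hu⟩ := concat_prefix α hk
  obtain ⟨v, hv⟩ := concat_prefix β hk
  have hSW : SW lam p b (concat α k) (wordB lam p b u) =
      SW lam p b (concat β k) (wordB lam p b v) := by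
    have := congrFun (SW_eq_of_elem_eq h) 0
    rwa [← hu, ← hv, SW_append, SW_append] at this
  rw [recSeq_eq_relPos hlam0.ne', Xi_eq_vertexSet]
  refine relPos_mem_vertexSet hlam0 hlam1.le hp ?_ (abs_wordB_le hlam0.le hlam1 hp u)
    (abs_wordB_le hlam0.le hlam1 hp v) hSW
  simpa only [zero_add] using hbal.abs_lag_le k hk

theorem concat_ne_concat_of_head_ne {α β : ℕ → List (Fin m)} (hα : (α 0).length = 1)
    (hβ : (β 0).length = 1) (hne : α 0 ≠ β 0) (M : ℕ) : concat α M ≠ concat β M := by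
  intro h
  have hαM : α 0 <+: concat α M := concat_zero α ▸ concat_prefix α M.zero_le
  have hβM : β 0 <+: concat α M := h ▸ concat_zero β ▸ concat_prefix β M.zero_le
  exact hne ((List.prefix_of_prefix_length_le hαM hβM (by omega)).eq_of_length (by omega))

end BalancedFactorization

theorem stmt10 (lam : ℝ) (hlam0 : 0 < lam) (hlam1 : lam < 1)
    (hPisot : IsPisot lam⁻¹)
    {m : ℕ} (hm : 2 ≤ m) (p : Fin m → ℕ) (hp : ∀ i, 1 ≤ p i)
    (b : Fin m → ℝ) (hbZ : ∀ i, ∃ z : ℤ, b i = (z : ℝ))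
    (T : ℕ) (hT : T = Finset.univ.sup p) :
    ¬ OSC lam p b ↔
      ∃ M : ℕ, 1 ≤ M ∧ ∃ α β : ℕ → List (Fin m),
        (∀ k : ℕ, k ≤ M → 1 ≤ wordP p (α k) ∧ wordP p (α k) ≤ 2 * T - 1 ∧
          1 ≤ wordP p (β k) ∧ wordP p (β k) ≤ 2 * T - 1) ∧
        (α 0).length = 1 ∧ (β 0).length = 1 ∧ α 0 ≠ β 0 ∧
        recSeq lam p b α β M = ((0 : ℤ), (0 : ℝ)) ∧
        ∀ k : ℕ, k ≤ M → recSeq lam p b α β k ∈ Xi lam b T := by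
  have hpT (i : Fin m) : p i ≤ T := hT ▸ Finset.le_sup (Finset.mem_univ i)
  have hlam := hlam0.ne'
  rw [osc_iff_injective_elem hlam0 hlam1 hPisot hp hbZ]
  constructor
  · intro hinj
    obtain ⟨i, j, u, v, hij, he⟩ := exists_ne_head_of_not_injective_elem hlam hp hinj
    obtain ⟨M, hM, α, β, hbal, hα, hβ, heM⟩ := exists_isBalanced_of_elem_eq hp hpT he
    refine ⟨M, hM, α, β, fun k hk => ?_, by simp [hα], by simp [hβ], by simpa [hα, hβ] using hij,
      (recSeq_eq_zero_iff hlam α β M).2 heM, fun k hk => hbal.recSeq_mem_Xi hlam0 hlam1 hp heM hk⟩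
    exact ⟨(hbal.wordP_left k hk).1, (hbal.wordP_left k hk).2, hbal.wordP_right k hk⟩
  · rintro ⟨M, -, α, β, -, hα, hβ, hne, hzero, -⟩ hinj
    exact concat_ne_concat_of_head_ne hα hβ hne M (hinj ((recSeq_eq_zero_iff hlam α β M).1 hzero))

end PVOSC
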